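/- Let β > 0 and let s₀ be a sink in G (a vertex emitting no edges). Then s₀ is A(β)-summable, i.e. Σ_{n=0}^∞ (A(β)ⁿ)_{v s₀} < ∞ for every v ∈ V, if and only if F(μ) > 0 for every loop μ in the closure of {s₀} and for every component C' of G contained in the closure of {s₀} there exists β' < β with ρ(A(β')^{C'}) = 1. -/

import Mathlib

open Filter Finset

/-- The spectral radius of a real matrix, `ρ(M) = lim_n ‖Mⁿ‖^{1/n}`
(computed with the entrywise ℓ¹-norm, and as a `limsup` so that it is always defined;
it is `0` for the matrix over the empty index type). -/
noncomputable def specRad {n : Type*} [Fintype n] [DecidableEq n] (M : Matrix n n ℝ) : ℝ :=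
  Filter.limsup (fun k : ℕ => (∑ i, ∑ j, |(M ^ k) i j|) ^ ((1 : ℝ) / (k : ℝ))) Filter.atTop

/-- The spectral radius `ρ(B^S)` of the submatrix of `B` obtained by restricting to `S × S`. -/
noncomputable def specRadOn {V : Type*} [Fintype V] (B : Matrix V V ℝ) (S : Set V) : ℝ :=
  letI : Fintype S := (Set.toFinite S).fintype
  letI : DecidableEq S := Classical.decEq _
  specRad (fun i j : S => B i.1 j.1)

variable {V E : Type*}

/-- Consecutive edges of the list match up: `r(eᵢ) = s(eᵢ₊₁)`. -/
def ChainOK (src rng : E → V) (μ : List E) : Prop :=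
  List.Chain' (fun e f => rng e = src f) μ

/-- A loop: a nonempty path `μ = e₁⋯eₙ` with `s(e₁) = r(eₙ)`. -/
def IsLoop (src rng : E → V) (μ : List E) : Prop :=
  ∃ h : μ ≠ [], ChainOK src rng μ ∧ src (μ.head h) = rng (μ.getLast h)

/-- A loop lying in the vertex set `C`. -/
def LoopIn (src rng : E → V) (C : Set V) (μ : List E) : Prop :=
  IsLoop src rng μ ∧ ∀ e ∈ μ, src e ∈ C ∧ rng e ∈ C

/-- `v ⤳ w`: there is a (possibly length-0) path from `v` to `w`. -/
def GReaches (src rng : E → V) (v w : V) : Prop :=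
  v = w ∨ ∃ μ : List E, ∃ h : μ ≠ [],
    ChainOK src rng μ ∧ src (μ.head h) = v ∧ rng (μ.getLast h) = w

/-- The closure of a set of vertices: all vertices that reach it. -/
def GClosure (src rng : E → V) (C : Set V) : Set V :=
  {v | ∃ w ∈ C, GReaches src rng v w}

/-- A component: an equivalence class of `v ∼ w` (mutual reachability) containing a loop. -/
def GIsComponent (src rng : E → V) (C : Set V) : Prop :=
  (∃ v, C = {w | GReaches src rng v w ∧ GReaches src rng w v}) ∧
  ∃ μ : List E, LoopIn src rng C μ

/-- The property that the loop `μ` witnesses circularity of the component `C`: `μ` is a simple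
loop visiting every vertex of `C`, and containing every edge of the graph joining vertices
of `C`. -/
def CircularWitness (src rng : E → V) (C : Set V) (μ : List E) : Prop :=
  LoopIn src rng C μ ∧ (μ.map src).Nodup ∧
  (∀ v ∈ C, v ∈ μ.map src) ∧
  (∀ e : E, src e ∈ C → rng e ∈ C → e ∈ μ)

/-- A circular component: a component containing, up to the choice of starting vertex,
exactly one loop. -/
def IsCircular (src rng : E → V) (C : Set V) : Prop :=
  GIsComponent src rng C ∧ ∃ μ : List E, CircularWitness src rng C μ

/-- The matrix `A(β)` with entries `A(β)_{vw} = Σ_{e : v → w} e^{-β F(e)}`. -/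
noncomputable def Amat [Fintype E] [DecidableEq V] (src rng : E → V) (F : E → ℝ) (β : ℝ) :
    Matrix V V ℝ :=
  fun v w => ∑ e ∈ Finset.univ.filter (fun e => src e = v ∧ rng e = w), Real.exp (-β * F e)

/-- `F` extended to paths: `F(e₁⋯eₙ) = F(e₁) + ⋯ + F(eₙ)`. -/
def Fpath (F : E → ℝ) (μ : List E) : ℝ := (μ.map F).sum

/-!
The powers of a block `A^C` are dominated by those of `A ≥ 0`, so summability at `s₀` makes
`∑ (A(β)^C)ᵏ` converge, that is `ρ(A(β)^C) < 1`, for every `C` in the closure of `s₀`. A loop in `C`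
with `β F(μ) ≤ 0` would force `ρ(A(β)^C) ≥ 1`, so these loops have positive weight; in particular
`ρ(A(0)^C) ≥ 1` for a component `C`, and the intermediate value theorem produces `β'`.

Conversely, if all loops have positive weight then some potential `p`, given by cheapest paths,
satisfies `F(e) ≥ c + p(s(e)) - p(r(e))` with `c > 0`. Conjugating `A(β)` by the diagonal matrix
`exp (-(β - β') p)` shows that `ρ(A(β)) ≤ exp (-(β - β') c) ρ(A(β'))` for `β' < β`, so
`ρ(A(β')^C) = 1` implies `ρ(A(β)^C) < 1`. Summability then propagates up the communication classes:
within a class `C` the partial sums satisfy `x ≤ d + A^C x`, with `d` bounding the contribution of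
the exits from `C`, and hence `x ≤ (∑ (A^C)ᵏ) d`.
-/

section SpectralRadius

variable {n : Type*} [Fintype n]

/-- The entrywise `ℓ¹`-norm of a matrix, whose growth along powers defines `specRad`. -/
noncomputable def entryNorm (M : Matrix n n ℝ) : ℝ := ∑ i, ∑ j, |M i j|

lemma entryNorm_nonneg (M : Matrix n n ℝ) : 0 ≤ entryNorm M :=
  sum_nonneg fun _ _ => sum_nonneg fun _ _ => abs_nonneg _

lemma row_le_entryNorm (M : Matrix n n ℝ) (i : n) : ∑ j, |M i j| ≤ entryNorm M :=
  single_le_sum (f := fun i => ∑ j, |M i j|) (fun _ _ => sum_nonneg fun _ _ => abs_nonneg _)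
    (mem_univ i)

lemma abs_apply_le_entryNorm (M : Matrix n n ℝ) (i j : n) : |M i j| ≤ entryNorm M :=
  (single_le_sum (f := fun j => |M i j|) (fun _ _ => abs_nonneg _) (mem_univ j)).trans
    (row_le_entryNorm M i)

lemma entryNorm_mul_le (M N : Matrix n n ℝ) : entryNorm (M * N) ≤ entryNorm M * entryNorm N := by
  have abs_mul_apply_le (i j : n) : |(M * N) i j| ≤ ∑ k, |M i k| * |N k j| := by
    simp only [Matrix.mul_apply, ← abs_mul]
    exact abs_sum_le_sum_abs _ _
  calc entryNorm (M * N) ≤ ∑ i, ∑ j, ∑ k, |M i k| * |N k j| :=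
        sum_le_sum fun i _ => sum_le_sum fun j _ => abs_mul_apply_le i j
    _ = ∑ i, ∑ k, |M i k| * ∑ j, |N k j| := by
        simp only [mul_sum]
        exact sum_congr rfl fun _ _ => sum_comm
    _ ≤ ∑ i, ∑ k, |M i k| * entryNorm N := by
        gcongr with i _ k _
        exact row_le_entryNorm N k
    _ = entryNorm M * entryNorm N := by simp only [← sum_mul, entryNorm]

lemma entryNorm_le_mul {M N : Matrix n n ℝ} {D : ℝ} (h : ∀ i j, |M i j| ≤ D * |N i j|) :
    entryNorm M ≤ D * entryNorm N := by
  simp only [entryNorm, mul_sum]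
  exact sum_le_sum fun i _ => sum_le_sum fun j _ => h i j

lemma specRadOn_eq_specRad_submatrix (M : Matrix n n ℝ) (C : Set n) [i₁ : Fintype C]
    [i₂ : DecidableEq C] : specRadOn M C = specRad (M.submatrix (↑) (↑) : Matrix C C ℝ) := by
  obtain rfl : i₁ = (Set.toFinite C).fintype := Subsingleton.elim _ _
  obtain rfl : i₂ = Classical.decEq _ := Subsingleton.elim _ _
  rfl

variable [DecidableEq n]

lemma exists_entryNorm_pow_le (M : Matrix n n ℝ) {k : ℕ} (hk : k ≠ 0) {q : ℝ} (hq : 0 < q)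
    (h : entryNorm (M ^ k) ≤ q ^ k) : ∃ D > 0, ∀ m, entryNorm (M ^ m) ≤ D * q ^ m := by
  have term_nonneg (r : ℕ) : 0 ≤ entryNorm (M ^ r) / q ^ r :=
    div_nonneg (entryNorm_nonneg _) (pow_nonneg hq.le r)
  refine ⟨1 + ∑ r ∈ range k, entryNorm (M ^ r) / q ^ r,
    add_pos_of_pos_of_nonneg one_pos (sum_nonneg fun r _ => term_nonneg r), fun m => ?_⟩
  induction m using Nat.strong_induction_on with
  | _ m ih =>
    rcases lt_or_ge m k with hm | hm
    · rw [← div_le_iff₀ (pow_pos hq m)]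
      have := single_le_sum (fun r _ => term_nonneg r) (mem_range.2 hm)
      linarith
    · obtain ⟨l, rfl⟩ := Nat.exists_eq_add_of_le' hm
      rw [pow_add, pow_add, ← mul_assoc]
      exact (entryNorm_mul_le _ _).trans
        (mul_le_mul (ih l (by omega)) h (entryNorm_nonneg _)
          ((entryNorm_nonneg _).trans (ih l (by omega))))

lemma rpow_one_div_le_mul_of_le_mul_pow {a D q : ℝ} {k : ℕ} (hk : k ≠ 0) (ha : 0 ≤ a) (hD : 0 ≤ D)
    (hq : 0 ≤ q) (h : a ≤ D * q ^ k) : a ^ (1 / k : ℝ) ≤ D ^ (1 / k : ℝ) * q := by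
  have := Real.rpow_le_rpow ha h (z := (1 / k : ℝ)) (by positivity)
  rwa [Real.mul_rpow hD (by positivity), one_div, Real.pow_rpow_inv_natCast hq hk,
    ← one_div] at this

lemma tendsto_rpow_one_div_mul {D : ℝ} (hD : 0 < D) (q : ℝ) :
    Tendsto (fun k : ℕ => D ^ (1 / k : ℝ) * q) atTop (nhds q) := by
  simpa using ((Real.continuousAt_const_rpow hD.ne').tendsto.comp
    tendsto_one_div_atTop_nhds_zero_nat).mul_const q

lemma eventually_root_entryNorm_pow_le {M : Matrix n n ℝ} {D q : ℝ} (hD : 0 < D) (hq : 0 ≤ q)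
    (h : ∀ᶠ k : ℕ in atTop, entryNorm (M ^ k) ≤ D * q ^ k) :
    ∀ᶠ k : ℕ in atTop, entryNorm (M ^ k) ^ (1 / k : ℝ) ≤ D ^ (1 / k : ℝ) * q := by
  filter_upwards [h, eventually_ne_atTop 0] with k hk hk0
  exact rpow_one_div_le_mul_of_le_mul_pow hk0 (entryNorm_nonneg _) hD.le hq hk

lemma isBoundedUnder_root_entryNorm_pow (M : Matrix n n ℝ) :
    IsBoundedUnder (· ≤ ·) atTop fun k : ℕ => entryNorm (M ^ k) ^ (1 / k : ℝ) := by
  have hq : 0 < entryNorm M + 1 := add_pos_of_nonneg_of_pos (entryNorm_nonneg M) one_pos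
  obtain ⟨D, hD, hle⟩ := exists_entryNorm_pow_le M one_ne_zero hq (by simp)
  exact (tendsto_rpow_one_div_mul hD _).isBoundedUnder_le.mono_le
    (eventually_root_entryNorm_pow_le hD hq.le (.of_forall hle))

lemma root_entryNorm_pow_nonneg (M : Matrix n n ℝ) (k : ℕ) :
    0 ≤ entryNorm (M ^ k) ^ (1 / k : ℝ) :=
  Real.rpow_nonneg (entryNorm_nonneg _) _

lemma specRad_nonneg (M : Matrix n n ℝ) : 0 ≤ specRad M :=
  le_limsup_of_frequently_le (.of_forall (root_entryNorm_pow_nonneg M))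
    (isBoundedUnder_root_entryNorm_pow M)

lemma specRad_le_of_eventually_le {M : Matrix n n ℝ} {D q : ℝ} (hD : 0 < D) (hq : 0 ≤ q)
    (h : ∀ᶠ k : ℕ in atTop, entryNorm (M ^ k) ≤ D * q ^ k) : specRad M ≤ q := by
  have ht := tendsto_rpow_one_div_mul hD q
  rw [← ht.limsup_eq]
  exact limsup_le_limsup (eventually_root_entryNorm_pow_le hD hq h)
    (isBoundedUnder_of ⟨0, root_entryNorm_pow_nonneg M⟩).isCoboundedUnder_le ht.isBoundedUnder_le

lemma eventually_entryNorm_pow_lt {M : Matrix n n ℝ} {r : ℝ} (h : specRad M < r) :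
    ∀ᶠ k : ℕ in atTop, entryNorm (M ^ k) < r ^ k := by
  filter_upwards [eventually_lt_of_limsup_lt h (isBoundedUnder_root_entryNorm_pow M),
    eventually_ne_atTop 0] with k hk hk0
  replace hk : entryNorm (M ^ k) ^ (1 / k : ℝ) < r := hk
  have := pow_lt_pow_left₀ hk (root_entryNorm_pow_nonneg M k) hk0
  rwa [one_div, Real.rpow_inv_natCast_pow (entryNorm_nonneg _) hk0] at this

lemma specRad_lt_of_entryNorm_pow_lt {M : Matrix n n ℝ} {r : ℝ} (hr : 0 < r) {k : ℕ} (hk : k ≠ 0)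
    (h : entryNorm (M ^ k) < r ^ k) : specRad M < r := by
  have h_pow : ∀ᶠ q in nhdsWithin r (Set.Iio r), entryNorm (M ^ k) < q ^ k :=
    ((continuous_pow k).tendsto r |>.mono_left nhdsWithin_le_nhds).eventually_const_lt h
  obtain ⟨q, hq, hq0, hqr⟩ := (h_pow.and (Ioo_mem_nhdsLT hr)).exists
  obtain ⟨D, hD, hle⟩ := exists_entryNorm_pow_le M hk hq0 hq.le
  exact (specRad_le_of_eventually_le hD hq0.le (.of_forall hle)).trans_lt hqr

lemma specRad_lt_one_iff_summable {M : Matrix n n ℝ} :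
    specRad M < 1 ↔ Summable fun k : ℕ => M ^ k := by
  constructor
  · intro h
    obtain ⟨q, hMq, hq1⟩ := exists_between h
    have hq0 : 0 < q := (specRad_nonneg M).trans_lt hMq
    obtain ⟨k, hk, hk0⟩ := ((eventually_entryNorm_pow_lt hMq).and (eventually_ne_atTop 0)).exists
    obtain ⟨D, -, hle⟩ := exists_entryNorm_pow_le M hk0 hq0 hk.le
    refine Pi.summable.2 fun i => Pi.summable.2 fun j => ?_
    exact .of_norm_bounded ((summable_geometric_of_lt_one hq0.le hq1).mul_left D) fun m =>
      (abs_apply_le_entryNorm (M ^ m) i j).trans (hle m)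
  · intro h
    have h_norm : Tendsto (fun k : ℕ => entryNorm (M ^ k)) atTop (nhds 0) := by
      have h_cont : Continuous (entryNorm : Matrix n n ℝ → ℝ) := by unfold entryNorm; fun_prop
      have h_zero : entryNorm (0 : Matrix n n ℝ) = 0 := by simp [entryNorm]
      simpa only [h_zero, Function.comp_def] using (h_cont.tendsto 0).comp h.tendsto_atTop_zero
    obtain ⟨k, hk, hk0⟩ :=
      ((h_norm.eventually_lt_const one_pos).and (eventually_ne_atTop 0)).exists
    exact specRad_lt_of_entryNorm_pow_lt one_pos hk0 (by simpa using hk)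

lemma specRad_le_mul_of_entryNorm_pow_le {M N : Matrix n n ℝ} {D q : ℝ} (hD : 0 < D) (hq : 0 < q)
    (h : ∀ k : ℕ, entryNorm (M ^ k) ≤ D * q ^ k * entryNorm (N ^ k)) :
    specRad M ≤ q * specRad N := by
  rw [← div_le_iff₀' hq]
  refine le_of_forall_gt_imp_ge_of_dense fun r hr => ?_
  have hr0 : 0 ≤ r := (specRad_nonneg N).trans hr.le
  rw [div_le_iff₀' hq]
  refine specRad_le_of_eventually_le hD (mul_nonneg hq.le hr0) ?_
  filter_upwards [eventually_entryNorm_pow_lt hr] with k hk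
  calc entryNorm (M ^ k) ≤ D * q ^ k * entryNorm (N ^ k) := h k
    _ ≤ D * q ^ k * r ^ k := by gcongr
    _ = D * (q * r) ^ k := by rw [mul_pow, mul_assoc]

end SpectralRadius

section NonnegativeMatrices

variable {n : Type*} [Fintype n] [DecidableEq n] {M N : Matrix n n ℝ}

lemma pow_apply_le_mul_of_diagonal_twist (hM : ∀ i j, 0 ≤ M i j) {q : ℝ} {d : n → ℝ}
    (hd : ∀ i, 0 < d i) (h : ∀ i j, M i j ≤ q * (d i / d j) * N i j) (k : ℕ) (i j : n) :
    (M ^ k) i j ≤ q ^ k * (d i / d j) * (N ^ k) i j := by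
  induction k generalizing j with
  | zero =>
    rcases eq_or_ne i j with rfl | hij
    · simp [(hd i).ne']
    · simp [hij]
  | succ k ih =>
    rw [pow_succ, pow_succ N, Matrix.mul_apply, Matrix.mul_apply, mul_sum]
    refine sum_le_sum fun l _ => ?_
    calc (M ^ k) i l * M l j
        ≤ (q ^ k * (d i / d l) * (N ^ k) i l) * (q * (d l / d j) * N l j) :=
          mul_le_mul (ih l) (h l j) (hM l j) ((Matrix.pow_apply_nonneg hM k i l).trans (ih l))
      _ = q ^ (k + 1) * (d i / d j) * ((N ^ k) i l * N l j) := by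
          have := (hd l).ne'
          field_simp
          ring

lemma specRad_le_mul_of_diagonal_twist (hM : ∀ i j, 0 ≤ M i j) {q : ℝ} (hq : 0 < q) {d : n → ℝ}
    (hd : ∀ i, 0 < d i) (h : ∀ i j, M i j ≤ q * (d i / d j) * N i j) :
    specRad M ≤ q * specRad N := by
  have hratio (i j : n) : 0 < d i / d j := div_pos (hd i) (hd j)
  have hD : 0 < 1 + entryNorm (Matrix.of fun i j => d i / d j) :=
    add_pos_of_pos_of_nonneg one_pos (entryNorm_nonneg _)
  refine specRad_le_mul_of_entryNorm_pow_le hD hq fun k => entryNorm_le_mul fun i j => ?_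
  have hle : d i / d j ≤ 1 + entryNorm (Matrix.of fun i j => d i / d j) := by
    have := abs_apply_le_entryNorm (Matrix.of fun i j => d i / d j) i j
    rw [Matrix.of_apply, abs_of_pos (hratio i j)] at this
    linarith
  calc |(M ^ k) i j| = (M ^ k) i j := abs_of_nonneg (Matrix.pow_apply_nonneg hM k i j)
    _ ≤ q ^ k * (d i / d j) * (N ^ k) i j := pow_apply_le_mul_of_diagonal_twist hM hd h k i j
    _ ≤ q ^ k * (d i / d j) * |(N ^ k) i j| :=
        mul_le_mul_of_nonneg_left (le_abs_self _) (mul_pos (pow_pos hq k) (hratio i j)).le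
    _ ≤ q ^ k * (1 + entryNorm (Matrix.of fun i j => d i / d j)) * |(N ^ k) i j| := by gcongr
    _ = _ := by rw [mul_comm (q ^ k)]

lemma pow_apply_mul_pow_apply_le (hM : ∀ i j, 0 ≤ M i j) (k l : ℕ) (u v w : n) :
    (M ^ k) u v * (M ^ l) v w ≤ (M ^ (k + l)) u w := by
  rw [pow_add, Matrix.mul_apply]
  exact single_le_sum (f := fun v => (M ^ k) u v * (M ^ l) v w)
    (fun x _ => mul_nonneg (Matrix.pow_apply_nonneg hM k u x) (Matrix.pow_apply_nonneg hM l x w))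
    (mem_univ v)

lemma pow_diag_pow_le (hM : ∀ i j, 0 ≤ M i j) (l : ℕ) (v : n) (k : ℕ) :
    (M ^ l) v v ^ k ≤ (M ^ (l * k)) v v := by
  induction k with
  | zero => simp
  | succ k ih =>
    rw [pow_succ, Nat.mul_succ]
    exact (mul_le_mul_of_nonneg_right ih (Matrix.pow_apply_nonneg hM l v v)).trans
      (pow_apply_mul_pow_apply_le hM _ _ v v v)

lemma one_le_specRad_of_one_le_pow_diag (hM : ∀ i j, 0 ≤ M i j) {l : ℕ} (hl : l ≠ 0) {v : n}
    (h : 1 ≤ (M ^ l) v v) : 1 ≤ specRad M := by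
  by_contra! hlt
  have hsum : Summable fun k : ℕ => (M ^ k) v v :=
    Pi.summable.1 (Pi.summable.1 (specRad_lt_one_iff_summable.1 hlt) v) v
  have hsub : Tendsto (fun k : ℕ => (M ^ (l * k)) v v) atTop (nhds 0) :=
    hsum.tendsto_atTop_zero.comp (tendsto_id.const_mul_atTop' (Nat.pos_of_ne_zero hl))
  have : (1 : ℝ) ≤ 0 := ge_of_tendsto' hsub fun k =>
    (one_le_pow₀ h).trans (pow_diag_pow_le hM l v k)
  exact this.not_gt one_pos

lemma submatrix_pow_apply_le (hM : ∀ i j, 0 ≤ M i j) (C : Set n) [Fintype C] [DecidableEq C]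
    (k : ℕ) (i j : C) : (M.submatrix (↑) (↑) ^ k : Matrix C C ℝ) i j ≤ (M ^ k) i j := by
  classical
  induction k generalizing j with
  | zero => simp [Matrix.one_apply, Subtype.ext_iff]
  | succ k ih =>
    rw [pow_succ, pow_succ, Matrix.mul_apply, Matrix.mul_apply]
    calc ∑ l : C, (M.submatrix (↑) (↑) ^ k : Matrix C C ℝ) i l * M l j
        ≤ ∑ l : C, (M ^ k) i l * M l j :=
          sum_le_sum fun l _ => mul_le_mul_of_nonneg_right (ih l) (hM l j)
      _ = ∑ l ∈ C.toFinset, (M ^ k) i l * M l j := sum_set_coe (f := fun l => (M ^ k) i l * M l j) C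
      _ ≤ ∑ l, (M ^ k) i l * M l j :=
          sum_le_univ_sum_of_nonneg fun l => mul_nonneg (Matrix.pow_apply_nonneg hM k i l) (hM l j)

/-- Reachability in the digraph of positive entries of a nonnegative matrix. -/
def PosReaches (M : Matrix n n ℝ) (v w : n) : Prop := ∃ k : ℕ, 0 < (M ^ k) v w

lemma PosReaches.refl (M : Matrix n n ℝ) (v : n) : PosReaches M v v := ⟨0, by simp⟩

lemma PosReaches.trans (hM : ∀ i j, 0 ≤ M i j) {u v w : n} :
    PosReaches M u v → PosReaches M v w → PosReaches M u w := by
  rintro ⟨k, hk⟩ ⟨l, hl⟩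
  exact ⟨k + l, (mul_pos hk hl).trans_le (pow_apply_mul_pow_apply_le hM k l u v w)⟩

lemma summable_pow_apply_of_posReaches (hM : ∀ i j, 0 ≤ M i j) {v w s : n} (hws : PosReaches M w s)
    (hs : Summable fun k : ℕ => (M ^ k) v s) : Summable fun k : ℕ => (M ^ k) v w := by
  obtain ⟨l, hl⟩ := hws
  refine .of_nonneg_of_le (fun k => Matrix.pow_apply_nonneg hM k v w) (fun k => ?_)
    (((summable_nat_add_iff l).2 hs).div_const ((M ^ l) w s))
  rw [le_div_iff₀ hl]
  exact pow_apply_mul_pow_apply_le hM k l v w s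

lemma specRadOn_lt_one_of_summable (hM : ∀ i j, 0 ≤ M i j) {s : n}
    (hs : ∀ v, Summable fun k : ℕ => (M ^ k) v s) {C : Set n} (hC : ∀ w ∈ C, PosReaches M w s) :
    specRadOn M C < 1 := by
  classical
  rw [specRadOn_eq_specRad_submatrix, specRad_lt_one_iff_summable]
  refine Pi.summable.2 fun i => Pi.summable.2 fun j => ?_
  exact .of_nonneg_of_le (fun k => Matrix.pow_apply_nonneg (fun _ _ => hM _ _) k i j)
    (fun k => submatrix_pow_apply_le hM C k i j)
    (summable_pow_apply_of_posReaches hM (hC j j.2) (hs i))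

lemma sum_range_pow_apply_le (hM : ∀ i j, 0 ≤ M i j) (K : ℕ) (u s : n) :
    ∑ k ∈ range K, (M ^ k) u s
      ≤ (1 : Matrix n n ℝ) u s + ∑ w, M u w * ∑ k ∈ range K, (M ^ k) w s := by
  calc ∑ k ∈ range K, (M ^ k) u s ≤ ∑ k ∈ range (K + 1), (M ^ k) u s :=
        sum_le_sum_of_subset_of_nonneg (range_mono K.le_succ)
          fun k _ _ => Matrix.pow_apply_nonneg hM k u s
    _ = (1 : Matrix n n ℝ) u s + ∑ w, M u w * ∑ k ∈ range K, (M ^ k) w s := by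
        simp only [sum_range_succ', pow_zero, pow_succ', Matrix.mul_apply, mul_sum]
        rw [add_comm, sum_comm]

lemma le_mulVec_tsum_pow_of_le (hM : ∀ i j, 0 ≤ M i j) (hρ : specRad M < 1) {x d : n → ℝ}
    (h : x ≤ d + M.mulVec x) : x ≤ (∑' k : ℕ, M ^ k).mulVec d := by
  have hsum := specRad_lt_one_iff_summable.1 hρ
  have hnonneg (i j : n) : 0 ≤ (∑' k : ℕ, M ^ k) i j := by
    have h_entry : HasSum (fun k => (M ^ k) i j) ((∑' k : ℕ, M ^ k) i j) :=
      Pi.hasSum.1 (Pi.hasSum.1 hsum.hasSum i) j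
    exact h_entry.nonneg fun k => Matrix.pow_apply_nonneg hM k i j
  calc x = (∑' k : ℕ, M ^ k).mulVec ((1 - M).mulVec x) := by
        rw [Matrix.mulVec_mulVec, hsum.tsum_pow_mul_one_sub, Matrix.one_mulVec]
    _ = (∑' k : ℕ, M ^ k).mulVec (x - M.mulVec x) := by rw [Matrix.sub_mulVec, Matrix.one_mulVec]
    _ ≤ (∑' k : ℕ, M ^ k).mulVec d := fun i =>
        dotProduct_le_dotProduct_of_nonneg_left (sub_le_iff_le_add.2 h) (hnonneg i)

lemma summable_pow_apply_of_specRadOn_lt_one (hM : ∀ i j, 0 ≤ M i j) {C : Set n} {s : n}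
    (hC : specRadOn M C < 1)
    (hexit : ∀ u ∈ C, ∀ w ∉ C, M u w ≠ 0 → Summable fun k : ℕ => (M ^ k) w s) {v : n} (hv : v ∈ C) :
    Summable fun k : ℕ => (M ^ k) v s := by
  classical
  rw [specRadOn_eq_specRad_submatrix] at hC
  set d : C → ℝ := fun u =>
    (1 : Matrix n n ℝ) u s + ∑ w : {w // w ∉ C}, M u w * ∑' k : ℕ, (M ^ k) w s
  have exit_le (K : ℕ) (u : C) (w : {w // w ∉ C}) :
      M u w * ∑ k ∈ range K, (M ^ k) w s ≤ M u w * ∑' k : ℕ, (M ^ k) w s := by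
    rcases eq_or_ne (M u w) 0 with h0 | h0
    · simp only [h0, zero_mul, le_refl]
    · exact mul_le_mul_of_nonneg_left ((hexit u u.2 w w.2 h0).sum_le_tsum _
        fun k _ => Matrix.pow_apply_nonneg hM k w s) (hM u w)
  have partial_sum_le (K : ℕ) : (fun u : C => ∑ k ∈ range K, (M ^ k) u s)
      ≤ d + (M.submatrix (↑) (↑) : Matrix C C ℝ).mulVec fun u => ∑ k ∈ range K, (M ^ k) u s := by
    intro u
    have h_rec := sum_range_pow_apply_le hM K u s
    rw [← Fintype.sum_subtype_add_sum_subtype (· ∈ C)] at h_rec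
    have h_exit := sum_le_sum fun w (_ : w ∈ univ) => exit_le K u w
    change _ ≤ (1 : Matrix n n ℝ) u s + ∑ w : {w // w ∉ C}, M u w * ∑' k : ℕ, (M ^ k) w s
      + ∑ w : C, M u w * ∑ k ∈ range K, (M ^ k) w s
    linarith
  exact summable_of_sum_range_le (fun k => Matrix.pow_apply_nonneg hM k v s) fun K =>
    le_mulVec_tsum_pow_of_le (fun _ _ => hM _ _) hC (partial_sum_le K) ⟨v, hv⟩

lemma wellFounded_strict_posReaches (hM : ∀ i j, 0 ≤ M i j) :
    WellFounded fun w v => PosReaches M v w ∧ ¬ PosReaches M w v :=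
  have : Std.Irrefl fun w v => PosReaches M v w ∧ ¬ PosReaches M w v := ⟨fun _ h => h.2 h.1⟩
  have : IsTrans n fun w v => PosReaches M v w ∧ ¬ PosReaches M w v :=
    ⟨fun _ _ _ h₁ h₂ => ⟨h₂.1.trans hM h₁.1, fun h => h₁.2 (h.trans hM h₂.1)⟩⟩
  Finite.wellFounded_of_trans_of_irrefl _

lemma summable_pow_apply_of_specRadOn_class_lt_one (hM : ∀ i j, 0 ≤ M i j) {s : n}
    (hclass : ∀ v, PosReaches M v s →
      specRadOn M {w | PosReaches M v w ∧ PosReaches M w v} < 1) (v : n) :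
    Summable fun k : ℕ => (M ^ k) v s := by
  induction v using (wellFounded_strict_posReaches hM).induction with
  | _ v ih =>
    by_cases hv : PosReaches M v s
    · refine summable_pow_apply_of_specRadOn_lt_one hM (hclass v hv) (fun u hu w hw huw => ?_)
        ⟨.refl M v, .refl M v⟩
      have hvw : PosReaches M v w :=
        hu.1.trans hM ⟨1, by simpa using (hM u w).lt_of_ne' huw⟩
      exact ih w ⟨hvw, fun hwv => hw ⟨hvw, hwv⟩⟩
    · have hzero (k : ℕ) : (M ^ k) v s = 0 :=
        (Matrix.pow_apply_nonneg hM k v s).eq_of_not_lt' fun hk => hv ⟨k, hk⟩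
      simp only [hzero, summable_zero]

end NonnegativeMatrices

section Paths

variable {src rng : E → V}

/-- `EdgePath src rng v μ w`: the edges of `μ` form a path from `v` to `w`. The endpoints are
recorded so that each vertex carries its own path of length 0. -/
def EdgePath (src rng : E → V) : V → List E → V → Prop
  | v, [], w => v = w
  | v, e :: μ, w => src e = v ∧ EdgePath src rng (rng e) μ w

lemma edgePath_append {v w : V} {μ ν : List E} :
    EdgePath src rng v (μ ++ ν) w ↔ ∃ u, EdgePath src rng v μ u ∧ EdgePath src rng u ν w := by
  induction μ generalizing v with
  | nil => simp [EdgePath]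
  | cons e μ ih => simp [EdgePath, ih, and_assoc]

lemma EdgePath.target_unique {v w w' : V} {μ : List E} (h : EdgePath src rng v μ w)
    (h' : EdgePath src rng v μ w') : w = w' := by
  induction μ generalizing v with
  | nil => exact h.symm.trans h'
  | cons e μ ih => exact ih h.2 h'.2

lemma chainOK_iff_isChain {μ : List E} :
    ChainOK src rng μ ↔ μ.IsChain fun e f => rng e = src f := Iff.rfl

lemma edgePath_iff_chainOK {v w : V} {μ : List E} (hμ : μ ≠ []) :
    EdgePath src rng v μ w ↔
      ChainOK src rng μ ∧ src (μ.head hμ) = v ∧ rng (μ.getLast hμ) = w := by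
  induction μ generalizing v with
  | nil => exact absurd rfl hμ
  | cons e μ ih =>
    rcases μ with _ | ⟨f, μ⟩
    · simp [EdgePath, chainOK_iff_isChain]
    · rw [EdgePath, ih (List.cons_ne_nil f μ)]
      simp only [chainOK_iff_isChain, List.isChain_cons_cons, List.head_cons,
        List.getLast_cons_cons]
      tauto

lemma isLoop_iff_edgePath {μ : List E} :
    IsLoop src rng μ ↔ μ ≠ [] ∧ ∃ v, EdgePath src rng v μ v := by
  constructor
  · rintro ⟨hμ, hchain, hends⟩
    exact ⟨hμ, _, (edgePath_iff_chainOK hμ).2 ⟨hchain, hends, rfl⟩⟩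
  · rintro ⟨hμ, v, hpath⟩
    obtain ⟨hchain, hhead, hlast⟩ := (edgePath_iff_chainOK hμ).1 hpath
    exact ⟨hμ, hchain, hhead.trans hlast.symm⟩

lemma gReaches_iff_edgePath {v w : V} :
    GReaches src rng v w ↔ ∃ μ, EdgePath src rng v μ w := by
  constructor
  · rintro (rfl | ⟨μ, hμ, h⟩)
    · exact ⟨[], rfl⟩
    · exact ⟨μ, (edgePath_iff_chainOK hμ).2 h⟩
  · rintro ⟨μ, h⟩
    rcases eq_or_ne μ [] with rfl | hμ
    · exact .inl h
    · exact .inr ⟨μ, hμ, (edgePath_iff_chainOK hμ).1 h⟩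

lemma EdgePath.exists_loop_factor [Fintype V] {v w : V} {μ : List E}
    (h : EdgePath src rng v μ w) (hμ : Fintype.card V ≤ μ.length) :
    ∃ μ₁ μ₂ μ₃ u, μ = μ₁ ++ (μ₂ ++ μ₃) ∧ μ₂ ≠ [] ∧
      EdgePath src rng v μ₁ u ∧ EdgePath src rng u μ₂ u ∧ EdgePath src rng u μ₃ w := by
  have exists_visited (i : ℕ) :
      ∃ u, EdgePath src rng v (μ.take i) u ∧ EdgePath src rng u (μ.drop i) w :=
    edgePath_append.1 ((List.take_append_drop i μ).symm ▸ h)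
  choose u hu_take hu_drop using exists_visited
  obtain ⟨i, j, hij, huij⟩ : ∃ i j : Fin (μ.length + 1), i < j ∧ u i = u j := by
    obtain ⟨i, j, hne, heq⟩ := Fintype.exists_ne_map_eq_of_card_lt
      (fun i : Fin (μ.length + 1) => u i) (by simpa using Nat.lt_succ_of_le hμ)
    rcases lt_or_gt_of_ne hne with hlt | hlt
    exacts [⟨i, j, hlt, heq⟩, ⟨j, i, hlt, heq.symm⟩]
  obtain ⟨l, hl⟩ := Nat.exists_eq_add_of_lt (Fin.lt_def.1 hij)
  have h_drop : (μ.drop i).take (l + 1) ++ μ.drop j = μ.drop i := by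
    rw [hl, add_assoc, ← List.drop_drop, List.take_append_drop]
  refine ⟨μ.take i, (μ.drop i).take (l + 1), μ.drop j, u i, ?_, ?_, hu_take i, ?_,
    huij ▸ hu_drop j⟩
  · rw [h_drop, List.take_append_drop]
  · have := j.is_lt
    simp only [ne_eq, List.take_eq_nil_iff, List.drop_eq_nil_iff]
    omega
  · have h_take : μ.take i ++ (μ.drop i).take (l + 1) = μ.take j := by
      rw [hl, add_assoc, ← List.take_add]
    obtain ⟨u', hu', hu'j⟩ := edgePath_append.1 (h_take ▸ hu_take j)
    rwa [hu'.target_unique (hu_take i), ← huij] at hu'j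

lemma EdgePath.exists_isLoop [Fintype V] {v w : V} {μ : List E} (h : EdgePath src rng v μ w)
    (hμ : Fintype.card V ≤ μ.length) : ∃ ν, IsLoop src rng ν := by
  obtain ⟨-, ν, -, u, -, hν, -, hloop, -⟩ := h.exists_loop_factor hμ
  exact ⟨ν, isLoop_iff_edgePath.2 ⟨hν, u, hloop⟩⟩

end Paths

section Potentials

variable {src rng : E → V} {F G : E → ℝ}

lemma Fpath_nil (F : E → ℝ) : Fpath F [] = 0 := rfl

lemma Fpath_cons (F : E → ℝ) (e : E) (μ : List E) : Fpath F (e :: μ) = F e + Fpath F μ := by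
  simp only [Fpath, List.map_cons, List.sum_cons]

lemma Fpath_append (F : E → ℝ) (μ ν : List E) : Fpath F (μ ++ ν) = Fpath F μ + Fpath F ν := by
  simp only [Fpath, List.map_append, List.sum_append]

lemma Fpath_sub_const (F : E → ℝ) (c : ℝ) (μ : List E) :
    Fpath (fun e => F e - c) μ = Fpath F μ - c * μ.length := by
  induction μ with
  | nil => simp [Fpath_nil]
  | cons e μ ih => rw [Fpath_cons, Fpath_cons, ih, List.length_cons]; push_cast; ring

lemma exists_edgePath_minimizing_Fpath [Finite E] (src rng : E → V) (G : E → ℝ) (v : V) {N : ℕ}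
    (hN : 0 < N) : ∃ μ w, μ.length < N ∧ EdgePath src rng v μ w ∧
      ∀ ν w', ν.length < N → EdgePath src rng v ν w' → Fpath G μ ≤ Fpath G ν := by
  have hfin : {μ : List E | μ.length < N ∧ ∃ w, EdgePath src rng v μ w}.Finite :=
    (List.finite_length_lt E N).subset fun _ h => h.1
  obtain ⟨μ, ⟨hlen, w, hμ⟩, hmin⟩ :=
    Set.exists_min_image _ (Fpath G) hfin ⟨[], hN, v, rfl⟩
  exact ⟨μ, w, hlen, hμ, fun ν w' hν hpath => hmin ν ⟨hν, w', hpath⟩⟩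

lemma exists_potential_of_nonneg [Fintype V] [Finite E]
    (hG : ∀ μ, IsLoop src rng μ → μ.length ≤ Fintype.card V → 0 ≤ Fpath G μ) :
    ∃ p : V → ℝ, ∀ e, p (src e) ≤ G e + p (rng e) := by
  choose μ w hlen hpath hmin using fun v : V =>
    exists_edgePath_minimizing_Fpath src rng G v (Fintype.card_pos_iff.2 ⟨v⟩)
  refine ⟨fun v => Fpath G (μ v), fun e => ?_⟩
  have hlen_e := hlen (rng e)
  have hext : EdgePath src rng (src e) (e :: μ (rng e)) (w (rng e)) := ⟨rfl, hpath (rng e)⟩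
  rw [← Fpath_cons]
  rcases lt_or_ge (e :: μ (rng e)).length (Fintype.card V) with hshort | hlong
  · exact hmin (src e) _ _ hshort hext
  · obtain ⟨μ₁, μ₂, μ₃, u, hsplit, hne, h₁, h₂, h₃⟩ := hext.exists_loop_factor hlong
    have hlength := congrArg List.length hsplit
    have hpos := List.length_pos_iff.2 hne
    simp only [List.length_cons, List.length_append] at hlength
    have hcut : Fpath G (μ (src e)) ≤ Fpath G (μ₁ ++ μ₃) := by
      refine hmin (src e) _ _ ?_ (edgePath_append.2 ⟨u, h₁, h₃⟩)
      rw [List.length_append]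
      omega
    have hloop : 0 ≤ Fpath G μ₂ := hG μ₂ (isLoop_iff_edgePath.2 ⟨hne, u, h₂⟩) (by omega)
    rw [hsplit]
    simp only [Fpath_append] at hcut ⊢
    linarith

lemma exists_pos_mul_length_le [Finite E] (hF : ∀ μ, IsLoop src rng μ → 0 < Fpath F μ) (N : ℕ) :
    ∃ c > 0, ∀ μ, IsLoop src rng μ → μ.length ≤ N → c * μ.length ≤ Fpath F μ := by
  have h_each (μ : List E) (hμ : IsLoop src rng μ) :
      ∀ᶠ c : ℝ in nhdsWithin 0 (Set.Ioi 0), c * μ.length ≤ Fpath F μ := by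
    have : Tendsto (fun c : ℝ => c * μ.length) (nhdsWithin 0 (Set.Ioi 0)) (nhds 0) :=
      ((continuous_mul_const (μ.length : ℝ)).tendsto' 0 0 (zero_mul _)).mono_left
        nhdsWithin_le_nhds
    exact (this.eventually_lt_const (hF μ hμ)).mono fun _ => le_of_lt
  have hfin : {μ : List E | IsLoop src rng μ ∧ μ.length ≤ N}.Finite :=
    (List.finite_length_le E N).subset fun _ h => h.2
  obtain ⟨c, hc, hc0⟩ := (((eventually_all_finite hfin).2 fun μ hμ => h_each μ hμ.1).and
    self_mem_nhdsWithin).exists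
  exact ⟨c, hc0, fun μ hμ hlen => hc μ ⟨hμ, hlen⟩⟩

lemma exists_potential [Finite V] [Finite E] (hF : ∀ μ, IsLoop src rng μ → 0 < Fpath F μ) :
    ∃ c > 0, ∃ p : V → ℝ, ∀ e, c + p (src e) ≤ F e + p (rng e) := by
  have := Fintype.ofFinite V
  obtain ⟨c, hc, hle⟩ := exists_pos_mul_length_le hF (Fintype.card V)
  obtain ⟨p, hp⟩ := exists_potential_of_nonneg (src := src) (rng := rng) (G := fun e => F e - c)
    fun μ hμ hlen => by
      rw [Fpath_sub_const]
      exact sub_nonneg.2 (hle μ hμ hlen)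
  exact ⟨c, hc, p, fun e => by linarith [hp e]⟩

end Potentials

section WeightedAdjacency

variable [Fintype E] [DecidableEq V] {src rng : E → V} {F : E → ℝ} {β : ℝ}

lemma Amat_nonneg (v w : V) : 0 ≤ Amat src rng F β v w :=
  sum_nonneg fun _ _ => (Real.exp_pos _).le

lemma exp_le_Amat (src rng : E → V) (F : E → ℝ) (β : ℝ) (e : E) :
    Real.exp (-β * F e) ≤ Amat src rng F β (src e) (rng e) :=
  single_le_sum (f := fun e => Real.exp (-β * F e)) (fun _ _ => (Real.exp_pos _).le)
    (mem_filter.2 ⟨mem_univ e, rfl, rfl⟩)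

lemma Amat_pos_iff {v w : V} : 0 < Amat src rng F β v w ↔ ∃ e, src e = v ∧ rng e = w := by
  constructor
  · intro h
    obtain ⟨e, he, -⟩ := exists_ne_zero_of_sum_ne_zero h.ne'
    exact ⟨e, (mem_filter.1 he).2⟩
  · rintro ⟨e, rfl, rfl⟩
    exact (Real.exp_pos _).trans_le (exp_le_Amat src rng F β e)

lemma Amat_le_mul_Amat {β' c : ℝ} {v w : V}
    (h : ∀ e, src e = v → rng e = w → Real.exp (-β * F e) ≤ c * Real.exp (-β' * F e)) :
    Amat src rng F β v w ≤ c * Amat src rng F β' v w := by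
  rw [Amat, Amat, mul_sum]
  refine sum_le_sum fun e he => ?_
  obtain ⟨-, hv, hw⟩ := mem_filter.1 he
  exact h e hv hw

variable [Fintype V]

lemma EdgePath.exp_le_Amat_pow {v w : V} {μ : List E} (h : EdgePath src rng v μ w) :
    Real.exp (-β * Fpath F μ) ≤ (Amat src rng F β ^ μ.length) v w := by
  induction μ generalizing v with
  | nil =>
    obtain rfl : v = w := h
    simp [Fpath_nil]
  | cons e μ ih =>
    obtain ⟨rfl, h⟩ := h
    calc Real.exp (-β * Fpath F (e :: μ))
        = Real.exp (-β * F e) * Real.exp (-β * Fpath F μ) := by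
          rw [Fpath_cons, mul_add, Real.exp_add]
      _ ≤ (Amat src rng F β ^ 1) (src e) (rng e) * (Amat src rng F β ^ μ.length) (rng e) w := by
          rw [pow_one]
          exact mul_le_mul (exp_le_Amat src rng F β e) (ih h) (Real.exp_pos _).le (Amat_nonneg _ _)
      _ ≤ (Amat src rng F β ^ (e :: μ).length) (src e) w := by
          rw [List.length_cons, add_comm]
          exact pow_apply_mul_pow_apply_le Amat_nonneg 1 μ.length _ _ _

lemma Amat_pow_pos_iff {k : ℕ} {v w : V} :
    0 < (Amat src rng F β ^ k) v w ↔ ∃ μ : List E, μ.length = k ∧ EdgePath src rng v μ w := by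
  constructor
  · intro h
    induction k generalizing v with
    | zero =>
      refine ⟨[], rfl, ?_⟩
      by_contra hvw
      rw [pow_zero, Matrix.one_apply_ne hvw] at h
      exact h.false
    | succ k ih =>
      rw [pow_succ', Matrix.mul_apply] at h
      obtain ⟨u, -, hu⟩ := exists_ne_zero_of_sum_ne_zero h.ne'
      obtain ⟨e, rfl, rfl⟩ := Amat_pos_iff.1
        ((Amat_nonneg (src := src) (rng := rng) (F := F) (β := β) v u).lt_of_ne'
          (left_ne_zero_of_mul hu))
      obtain ⟨μ, rfl, hμ⟩ := ih ((Matrix.pow_apply_nonneg Amat_nonneg k _ _).lt_of_ne'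
        (right_ne_zero_of_mul hu))
      exact ⟨e :: μ, rfl, rfl, hμ⟩
  · rintro ⟨μ, rfl, hμ⟩
    exact (Real.exp_pos _).trans_le hμ.exp_le_Amat_pow

lemma posReaches_Amat_iff {v w : V} :
    PosReaches (Amat src rng F β) v w ↔ GReaches src rng v w := by
  simp only [PosReaches, Amat_pow_pos_iff, gReaches_iff_edgePath]
  exact ⟨fun ⟨_, μ, _, hμ⟩ => ⟨μ, hμ⟩, fun ⟨μ, hμ⟩ => ⟨_, μ, rfl, hμ⟩⟩

lemma one_le_specRad_Amat {μ : List E} (hμ : IsLoop src rng μ) (hF : β * Fpath F μ ≤ 0) :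
    1 ≤ specRad (Amat src rng F β) := by
  obtain ⟨hne, v, hpath⟩ := isLoop_iff_edgePath.1 hμ
  refine one_le_specRad_of_one_le_pow_diag Amat_nonneg (l := μ.length) (by simpa using hne) (v := v)
    (le_trans ?_ hpath.exp_le_Amat_pow)
  exact Real.one_le_exp (by linarith)

lemma specRad_Amat_lt_one_of_no_loop (h : ∀ μ, ¬ IsLoop src rng μ) :
    specRad (Amat src rng F β) < 1 := by
  have pow_eq_zero : Amat src rng F β ^ (Fintype.card V + 1) = 0 := by
    ext v w
    refine (Matrix.pow_apply_nonneg Amat_nonneg _ v w).eq_of_not_lt' fun hpos => ?_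
    obtain ⟨μ, hlen, hμ⟩ := Amat_pow_pos_iff.1 hpos
    obtain ⟨ν, hν⟩ := hμ.exists_isLoop (by omega)
    exact h ν hν
  refine specRad_lt_of_entryNorm_pow_lt one_pos (Nat.succ_ne_zero (Fintype.card V)) ?_
  simp [pow_eq_zero, entryNorm]

lemma specRad_Amat_lt_one_of_lt {β' : ℝ} (hF : ∀ μ, IsLoop src rng μ → 0 < Fpath F μ)
    (hβ : β' < β) (h : specRad (Amat src rng F β') ≤ 1) : specRad (Amat src rng F β) < 1 := by
  obtain ⟨c, hc, p, hp⟩ := exists_potential hF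
  have hδ : 0 < β - β' := sub_pos.2 hβ
  have edge_le (e : E) : Real.exp (-β * F e) ≤ Real.exp (-(β - β') * c) *
      (Real.exp (-(β - β') * p (src e)) / Real.exp (-(β - β') * p (rng e))) *
        Real.exp (-β' * F e) := by
    rw [← Real.exp_sub, ← Real.exp_add, ← Real.exp_add, Real.exp_le_exp]
    linarith [mul_le_mul_of_nonneg_left (hp e) hδ.le]
  calc specRad (Amat src rng F β)
      ≤ Real.exp (-(β - β') * c) * specRad (Amat src rng F β') :=
        specRad_le_mul_of_diagonal_twist Amat_nonneg (Real.exp_pos _)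
          (d := fun v => Real.exp (-(β - β') * p v)) (fun _ => Real.exp_pos _)
          fun v w => Amat_le_mul_Amat <| by rintro e rfl rfl; exact edge_le e
    _ ≤ Real.exp (-(β - β') * c) := mul_le_of_le_one_right (Real.exp_pos _).le h
    _ < 1 := Real.exp_lt_one_iff.2 (by nlinarith)

lemma specRad_Amat_le_exp_mul (src rng : E → V) (F : E → ℝ) (β β' : ℝ) :
    specRad (Amat src rng F β) ≤
      Real.exp (|β - β'| * ∑ e, |F e|) * specRad (Amat src rng F β') := by
  refine specRad_le_mul_of_diagonal_twist Amat_nonneg (Real.exp_pos _) (d := 1)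
    (fun _ => one_pos) fun v w => Amat_le_mul_Amat fun e _ _ => ?_
  have h_le : -(β - β') * F e ≤ |β - β'| * ∑ e, |F e| :=
    calc -(β - β') * F e ≤ |-(β - β') * F e| := le_abs_self _
      _ = |β - β'| * |F e| := by rw [abs_mul, abs_neg]
      _ ≤ |β - β'| * ∑ e, |F e| := mul_le_mul_of_nonneg_left
          (single_le_sum (f := fun e => |F e|) (fun _ _ => abs_nonneg _) (mem_univ e))
          (abs_nonneg _)
  rw [Pi.one_apply, Pi.one_apply, div_one, mul_one, ← Real.exp_add, Real.exp_le_exp]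
  linarith

lemma continuous_specRad_Amat (src rng : E → V) (F : E → ℝ) :
    Continuous fun β => specRad (Amat src rng F β) := by
  refine continuous_iff_continuousAt.2 fun β => ?_
  have h_lower (x : ℝ) : Real.exp (-(|β - x| * ∑ e, |F e|)) * specRad (Amat src rng F β)
      ≤ specRad (Amat src rng F x) := by
    rw [Real.exp_neg, inv_mul_le_iff₀ (Real.exp_pos _)]
    exact specRad_Amat_le_exp_mul src rng F β x
  refine tendsto_of_tendsto_of_tendsto_of_le_of_le ?_ ?_ h_lower
    fun x => specRad_Amat_le_exp_mul src rng F x β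
  all_goals exact Continuous.tendsto' (by fun_prop) _ _ (by simp)

end WeightedAdjacency

section InducedSubgraph

variable {src rng : E → V} {F : E → ℝ} {β : ℝ} {C : Set V}

/-- The edges of the subgraph induced on the vertex set `C`, whose adjacency matrix is the
`C × C` block of that of the whole graph. -/
abbrev InducedEdge (src rng : E → V) (C : Set V) : Type _ := {e : E // src e ∈ C ∧ rng e ∈ C}

/-- The source map of the subgraph induced on `C`. -/
def inducedSrc (src rng : E → V) (C : Set V) (e : InducedEdge src rng C) : C := ⟨src e, e.2.1⟩

/-- The range map of the subgraph induced on `C`. -/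
def inducedRng (src rng : E → V) (C : Set V) (e : InducedEdge src rng C) : C := ⟨rng e, e.2.2⟩

lemma loopIn_map_val_iff {μ : List (InducedEdge src rng C)} :
    LoopIn src rng C (μ.map (↑)) ↔ IsLoop (inducedSrc src rng C) (inducedRng src rng C) μ := by
  have h_mem : ∀ e ∈ μ.map (↑), src e ∈ C ∧ rng e ∈ C := by
    simp only [List.mem_map, forall_exists_index, and_imp]
    rintro - e - rfl
    exact e.2
  rw [LoopIn, and_iff_left h_mem]
  simp only [IsLoop, chainOK_iff_isChain, List.isChain_map, inducedSrc, inducedRng, List.head_map,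
    List.getLast_map, Subtype.mk.injEq, ne_eq, List.map_eq_nil_iff]

lemma LoopIn.exists_induced {μ : List E} (hμ : LoopIn src rng C μ) :
    ∃ ν : List (InducedEdge src rng C),
      IsLoop (inducedSrc src rng C) (inducedRng src rng C) ν ∧ ν.map (↑) = μ := by
  lift μ to List (InducedEdge src rng C) using hμ.2
  exact ⟨μ, loopIn_map_val_iff.1 hμ, rfl⟩

lemma Fpath_map_val (μ : List (InducedEdge src rng C)) :
    Fpath F (μ.map (↑)) = Fpath (fun e : InducedEdge src rng C => F e) μ := by
  simp only [Fpath, List.map_map, Function.comp_def]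

variable [Fintype E] [DecidableEq V]

lemma submatrix_Amat [DecidableEq C] [Fintype (InducedEdge src rng C)] :
    (Amat src rng F β).submatrix (↑) (↑) =
      Amat (inducedSrc src rng C) (inducedRng src rng C) (fun e => F e) β := by
  ext v w
  symm
  refine sum_bij (fun e _ => e.1) ?_ (fun _ _ _ _ => Subtype.ext) ?_ fun _ _ => rfl
  · simp [inducedSrc, inducedRng, Subtype.ext_iff]
  · simp only [mem_filter, mem_univ, true_and]
    rintro e ⟨hv, hw⟩
    exact ⟨⟨e, hv ▸ v.2, hw ▸ w.2⟩, ⟨Subtype.ext hv, Subtype.ext hw⟩, rfl⟩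

variable [Fintype V]

lemma specRadOn_Amat (src rng : E → V) (F : E → ℝ) (β : ℝ) (C : Set V) [Fintype C] [DecidableEq C]
    [Fintype (InducedEdge src rng C)] : specRadOn (Amat src rng F β) C =
      specRad (Amat (inducedSrc src rng C) (inducedRng src rng C) (fun e => F e) β) := by
  rw [specRadOn_eq_specRad_submatrix, submatrix_Amat]

lemma one_le_specRadOn_Amat {μ : List E} (hμ : LoopIn src rng C μ) (hF : β * Fpath F μ ≤ 0) :
    1 ≤ specRadOn (Amat src rng F β) C := by
  classical
  obtain ⟨ν, hν, rfl⟩ := hμ.exists_induced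
  rw [Fpath_map_val] at hF
  rw [specRadOn_Amat]
  exact one_le_specRad_Amat hν hF

lemma specRadOn_Amat_lt_one_of_no_loop (h : ∀ μ, ¬ LoopIn src rng C μ) :
    specRadOn (Amat src rng F β) C < 1 := by
  classical
  rw [specRadOn_Amat]
  exact specRad_Amat_lt_one_of_no_loop fun ν hν => h _ (loopIn_map_val_iff.2 hν)

lemma specRadOn_Amat_lt_one_of_lt {β' : ℝ} (hF : ∀ μ, LoopIn src rng C μ → 0 < Fpath F μ)
    (hβ : β' < β) (h : specRadOn (Amat src rng F β') C ≤ 1) :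
    specRadOn (Amat src rng F β) C < 1 := by
  classical
  rw [specRadOn_Amat] at h ⊢
  exact specRad_Amat_lt_one_of_lt
    (fun ν hν => Fpath_map_val (F := F) ν ▸ hF _ (loopIn_map_val_iff.2 hν)) hβ h

lemma continuous_specRadOn_Amat (src rng : E → V) (F : E → ℝ) (C : Set V) :
    Continuous fun β => specRadOn (Amat src rng F β) C := by
  classical
  simp only [specRadOn_Amat]
  exact continuous_specRad_Amat _ _ _

lemma exists_specRadOn_Amat_eq_one (hβ : 0 ≤ β) {μ : List E} (hμ : LoopIn src rng C μ)
    (h : specRadOn (Amat src rng F β) C < 1) :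
    ∃ β' < β, specRadOn (Amat src rng F β') C = 1 := by
  have h_zero : 1 ≤ specRadOn (Amat src rng F 0) C := one_le_specRadOn_Amat hμ (by simp)
  obtain ⟨β', hβ', h_one⟩ := intermediate_value_Icc' hβ
    (continuous_specRadOn_Amat src rng F C).continuousOn ⟨h.le, h_zero⟩
  refine ⟨β', hβ'.2.lt_of_ne ?_, h_one⟩
  rintro rfl
  exact h.ne h_one

end InducedSubgraph

theorem sink_summable_iff_general [Fintype V] [DecidableEq V] [Fintype E] (src rng : E → V)
    (F : E → ℝ) {β : ℝ} (hβ : 0 ≤ β) (s₀ : V) :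
    (∀ v : V, Summable (fun n : ℕ => ((Amat src rng F β) ^ n) v s₀)) ↔
    ((∀ μ : List E, LoopIn src rng (GClosure src rng {s₀}) μ → 0 < Fpath F μ) ∧
      (∀ C' : Set V, GIsComponent src rng C' → C' ⊆ GClosure src rng {s₀} →
        ∃ β' : ℝ, β' < β ∧ specRadOn (Amat src rng F β') C' = 1)) := by
  have mem_closure {v : V} : v ∈ GClosure src rng {s₀} ↔ PosReaches (Amat src rng F β) v s₀ := by
    simp only [GClosure, Set.mem_singleton_iff, exists_eq_left, Set.mem_ofPred_eq,
      posReaches_Amat_iff]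
  constructor
  · intro hsum
    have hρ {C : Set V} (hC : C ⊆ GClosure src rng {s₀}) : specRadOn (Amat src rng F β) C < 1 :=
      specRadOn_lt_one_of_summable Amat_nonneg hsum fun w hw => mem_closure.1 (hC hw)
    refine ⟨fun μ hμ => ?_, fun C' ⟨_, _, hμ⟩ hC' => exists_specRadOn_Amat_eq_one hβ hμ (hρ hC')⟩
    by_contra! hF
    exact (hρ subset_rfl).not_ge
      (one_le_specRadOn_Amat hμ (mul_nonpos_of_nonneg_of_nonpos hβ hF))
  · rintro ⟨hF, hcomp⟩
    refine summable_pow_apply_of_specRadOn_class_lt_one Amat_nonneg fun v hv => ?_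
    have hclosure : {w | PosReaches (Amat src rng F β) v w ∧ PosReaches (Amat src rng F β) w v}
        ⊆ GClosure src rng {s₀} := fun w hw => mem_closure.2 (hw.2.trans Amat_nonneg hv)
    simp only [posReaches_Amat_iff] at hclosure ⊢
    by_cases hloop : ∃ μ, LoopIn src rng {w | GReaches src rng v w ∧ GReaches src rng w v} μ
    · obtain ⟨β', hlt, h_one⟩ := hcomp _ ⟨⟨v, rfl⟩, hloop⟩ hclosure
      exact specRadOn_Amat_lt_one_of_lt
        (fun μ hμ => hF μ ⟨hμ.1, fun e he => (hμ.2 e he).imp (@hclosure _) (@hclosure _)⟩)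
        hlt h_one.le
    · exact specRadOn_Amat_lt_one_of_no_loop (not_exists.1 hloop)

/-- For `β > 0` and a sink `s₀`: `s₀` is `A(β)`-summable iff all loops in the closure of
`{s₀}` have `F > 0` and every component `C'` contained in that closure satisfies
`ρ(A(β')^{C'}) = 1` for some `β' < β`. -/
theorem sink_summable_iff {V E : Type*} [Fintype V] [DecidableEq V] [Fintype E]
    (src rng : E → V) (F : E → ℝ)
    (β : ℝ) (hβ : 0 < β)
    (s₀ : V) (hsink : ∀ e : E, src e ≠ s₀) :
    (∀ v : V, Summable (fun n : ℕ => ((Amat src rng F β) ^ n) v s₀)) ↔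
    ((∀ μ : List E, LoopIn src rng (GClosure src rng {s₀}) μ → 0 < Fpath F μ) ∧
      (∀ C' : Set V, GIsComponent src rng C' → C' ⊆ GClosure src rng {s₀} →
        ∃ β' : ℝ, β' < β ∧ specRadOn (Amat src rng F β') C' = 1)) := by
  exact sink_summable_iff_general src rng F hβ.le s₀
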